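/- (Theorem 3.1, partial estimator) Let (S_α)_{α ∈ ℕ^d} be integrable real random variables on a probability space (Ω, F, P), and let N be an ℕ^d-valued random variable independent of the family (S_α), with P(N ≥ α) > 0 for every α ∈ I_0^n, where n ∈ ℕ. Then the partial estimator Z̄_n = Σ_{α ∈ I_0^n} ΔS_α · 1_{{N ≥ α}} / P(N ≥ α) satisfies E[Z̄_n] = E[S_{(n,…,n)}]. -/

import Mathlib

open MeasureTheory ProbabilityTheory

/-- The `i`-th difference operator: `(Δ_i S)_α = S_α − S_{α−e_i}` if `α_i > 0`,
and `(Δ_i S)_α = S_α` if `α_i = 0`. -/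
def diffOp {d : ℕ} {V : Type*} [AddCommGroup V] [Module ℝ V]
    (i : Fin d) (S : (Fin d → ℕ) → V) : (Fin d → ℕ) → V :=
  fun α => if α i = 0 then S α else S α - S (Function.update α i (α i - 1))

/-- The mixed difference operator `Δ = Δ_1 ∘ ⋯ ∘ Δ_d`. -/
def mixedDiff {d : ℕ} {V : Type*} [AddCommGroup V] [Module ℝ V]
    (S : (Fin d → ℕ) → V) : (Fin d → ℕ) → V :=
  (List.finRange d).foldr (fun i T => diffOp i T) S

/-!
The differences telescope: summing `Δ_i S` over `0 ≤ α_i ≤ m_i` recovers the value of `S` at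
`α_i = m_i`, so, one direction after another, `∑_{α ≤ m} ΔS_α = S_m`. The event `{α ≤ N}` is
independent of `ΔS_α`, so averaging `ΔS_α` over it does not change the expectation. Hence the
weights `1_{α ≤ N} / P(α ≤ N)` disappear in expectation, and the sum telescopes to `E[S_m]`.
-/

/-- Fubini without removing a coordinate: the outer sum still runs over full tuples, whose `i`-th
entry is pinned to the irrelevant value `a`. -/
theorem sum_piFinset_update {ι M : Type*} {κ : ι → Type*} [Fintype ι] [DecidableEq ι]
    [AddCommMonoid M] (s : ∀ j, Finset (κ j)) (i : ι) (t : Finset (κ i)) (a : κ i)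
    (f : (∀ j, κ j) → M) :
    ∑ x ∈ Fintype.piFinset (Function.update s i t), f x =
      ∑ x ∈ Fintype.piFinset (Function.update s i {a}), ∑ k ∈ t, f (Function.update x i k) := by
  rw [← Finset.sum_product']
  refine Finset.sum_nbij' (fun x ↦ (Function.update x i a, x i))
    (fun p ↦ Function.update p.1 i p.2) ?mapsTo ?mapsFrom ?leftInv ?rightInv ?agree
  case mapsTo =>
    intro x hx
    simp only [Finset.mem_product, Fintype.mem_piFinset] at hx ⊢
    refine ⟨fun j ↦ ?_, by simpa using hx i⟩
    obtain rfl | hj := eq_or_ne j i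
    · simp
    · simpa [hj] using hx j
  case mapsFrom =>
    rintro ⟨x, k⟩ hx
    simp only [Finset.mem_product, Fintype.mem_piFinset] at hx ⊢
    intro j
    obtain rfl | hj := eq_or_ne j i
    · simpa using hx.2
    · simpa [hj] using hx.1 j
  case leftInv => simp
  case rightInv =>
    rintro ⟨x, k⟩ hx
    have hxi : x i = a := by simpa using Fintype.mem_piFinset.1 (Finset.mem_product.1 hx).1 i
    simp [← hxi]
  case agree => simp

section Differences

variable {d : ℕ} {V : Type*} [AddCommGroup V] [Module ℝ V]

theorem sum_Iic_diffOp_update (i : Fin d) (S : (Fin d → ℕ) → V) (α : Fin d → ℕ) (n : ℕ) :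
    ∑ k ∈ Finset.Iic n, diffOp i S (Function.update α i k) = S (Function.update α i n) := by
  rw [← Nat.range_succ_eq_Iic]
  induction n with
  | zero => simp [diffOp]
  | succ n ih =>
    rw [Finset.sum_range_succ, ih]
    simp [diffOp]

/-- The difference operator `Δ_{i₁} ∘ ⋯ ∘ Δ_{iₖ}` in the directions of the list `[i₁, …, iₖ]`. It
interpolates between the identity and `mixedDiff`, so that facts about the latter can be proved by
adding one direction at a time. -/
def diffAlong (l : List (Fin d)) (S : (Fin d → ℕ) → V) : (Fin d → ℕ) → V :=
  l.foldr (fun i T ↦ diffOp i T) S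

theorem mixedDiff_eq_diffAlong (S : (Fin d → ℕ) → V) :
    mixedDiff S = diffAlong (List.finRange d) S :=
  rfl

theorem diffAlong_cons (i : Fin d) (l : List (Fin d)) (S : (Fin d → ℕ) → V) :
    diffAlong (i :: l) S = diffOp i (diffAlong l S) :=
  rfl

theorem sum_diffAlong (S : (Fin d → ℕ) → V) (m : Fin d → ℕ) {l : List (Fin d)} (hl : l.Nodup) :
    ∑ α ∈ Fintype.piFinset (fun j ↦ if j ∈ l then Finset.Iic (m j) else {m j}), diffAlong l S α =
      S m := by
  induction l with
  | nil => simp [diffAlong, Fintype.piFinset_singleton]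
  | cons i l ih =>
    obtain ⟨hil, hl⟩ := List.nodup_cons.1 hl
    set box : Fin d → Finset ℕ := fun j ↦ if j ∈ l then Finset.Iic (m j) else {m j}
    have box_cons : (fun j ↦ if j ∈ i :: l then Finset.Iic (m j) else {m j}) =
        Function.update box i (Finset.Iic (m i)) := by
      ext1 j
      obtain rfl | hj := eq_or_ne j i <;> simp [box, *]
    have box_pinned : Function.update box i {m i} = box := by simp [box, hil]
    rw [box_cons, sum_piFinset_update box i _ (m i), box_pinned, ← ih hl]
    refine Finset.sum_congr rfl fun α hα ↦ ?_
    have hαi : α i = m i := by simpa [box, hil] using Fintype.mem_piFinset.1 hα i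
    rw [diffAlong_cons, sum_Iic_diffOp_update, ← hαi, Function.update_eq_self]

theorem sum_Iic_mixedDiff (S : (Fin d → ℕ) → V) (m : Fin d → ℕ) :
    ∑ α ∈ Finset.Iic m, mixedDiff S α = S m := by
  have box_eq : Finset.Iic m =
      Fintype.piFinset fun j ↦ if j ∈ List.finRange d then Finset.Iic (m j) else {m j} := by
    ext α
    simp [Pi.le_def]
  rw [mixedDiff_eq_diffAlong, box_eq, sum_diffAlong S m (List.nodup_finRange d)]

theorem measurable_mixedDiff [MeasurableSpace V] [MeasurableSub₂ V] (α : Fin d → ℕ) :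
    Measurable fun S : (Fin d → ℕ) → V ↦ mixedDiff S α := by
  simp only [mixedDiff_eq_diffAlong]
  induction List.finRange d generalizing α with
  | nil => exact measurable_pi_apply α
  | cons i l ih =>
    simp only [diffAlong_cons, diffOp]
    split_ifs
    · exact ih α
    · exact (ih α).sub (ih _)

end Differences

theorem integrable_mixedDiff {d : ℕ} {Ω E : Type*} [MeasurableSpace Ω] {μ : Measure Ω}
    [NormedAddCommGroup E] [NormedSpace ℝ E] {S : (Fin d → ℕ) → Ω → E} {α : Fin d → ℕ}
    (hS : ∀ β ≤ α, Integrable (S β) μ) :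
    Integrable (fun ω ↦ mixedDiff (fun β ↦ S β ω) α) μ := by
  simp only [mixedDiff_eq_diffAlong]
  induction List.finRange d generalizing α with
  | nil => exact hS α le_rfl
  | cons i l ih =>
    simp only [diffAlong_cons, diffOp]
    split_ifs
    · exact ih hS
    · have hle : Function.update α i (α i - 1) ≤ α :=
        update_le_self_iff.2 (Nat.sub_le _ _)
      exact (ih hS).sub (ih fun β hβ ↦ hS β (hβ.trans hle))

theorem indicator_one_div_smul_eq_indicator {Ω K E : Type*} [DivisionRing K] [AddCommGroup E]
    [Module K E] (A : Set Ω) (c : K) (X : Ω → E) :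
    (fun ω ↦ (A.indicator 1 ω / c) • X ω) = A.indicator fun ω ↦ c⁻¹ • X ω := by
  ext ω
  by_cases hω : ω ∈ A <;> simp [hω]

section IndependentEvent

variable {Ω E : Type*} [MeasurableSpace Ω] {μ : Measure Ω} [NormedAddCommGroup E] [NormedSpace ℝ E]

theorem setAverage_preimage_eq_integral_of_indepFun {β : Type*} [MeasurableSpace β]
    [MeasurableSpace E] [BorelSpace E] {N : Ω → β} {X : Ω → E} (hN : Measurable N)
    (hX : AEStronglyMeasurable X μ) (hNX : IndepFun N X μ) {B : Set β} (hB : MeasurableSet B)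
    (hμB : μ.real (N ⁻¹' B) ≠ 0) :
    ⨍ ω in N ⁻¹' B, X ω ∂μ = ∫ ω, X ω ∂μ := by
  have hint : ∫ ω in N ⁻¹' B, X ω ∂μ = μ.real (N ⁻¹' B) • ∫ ω, X ω ∂μ :=
    Indep.setIntegral_eq_smul (f := id) hN.comap_le hNX hX.aemeasurable ⟨B, hB, rfl⟩
      hX.aestronglyMeasurable_id_map
  rw [setAverage_eq, hint, inv_smul_smul₀ hμB]

theorem integrable_indicator_one_div_smul {A : Set Ω} (hA : MeasurableSet A) (c : ℝ) {X : Ω → E}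
    (hX : Integrable X μ) :
    Integrable (fun ω ↦ (A.indicator 1 ω / c) • X ω) μ := by
  rw [indicator_one_div_smul_eq_indicator]
  exact (hX.smul c⁻¹).indicator hA

theorem integral_indicator_one_div_measureReal_smul {A : Set Ω} (hA : MeasurableSet A)
    (X : Ω → E) :
    ∫ ω, (A.indicator 1 ω / μ.real A) • X ω ∂μ = ⨍ ω in A, X ω ∂μ := by
  rw [indicator_one_div_smul_eq_indicator, integral_indicator hA, integral_smul, setAverage_eq]

end IndependentEvent

/-- The partial estimator `Z̄ = ∑_{α ≤ m} ΔS_α · 1_{N ≥ α} / P(N ≥ α)`, for values in any real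
vector space and an arbitrary corner `m` in place of `(n, …, n)`. A term with `P(N ≥ α) = 0`
contributes `0`. -/
noncomputable def partialEstimator {d : ℕ} {Ω V : Type*} [MeasurableSpace Ω] [AddCommGroup V]
    [Module ℝ V] (μ : Measure Ω) (S : (Fin d → ℕ) → Ω → V) (N : Ω → Fin d → ℕ) (m : Fin d → ℕ) :
    Ω → V :=
  fun ω ↦ ∑ α ∈ Finset.Iic m,
    ({ω' | α ≤ N ω'}.indicator 1 ω / μ.real {ω' | α ≤ N ω'}) • mixedDiff (fun β ↦ S β ω) α

theorem partial_estimator_unbiased_general {d : ℕ} {Ω E : Type*} [MeasurableSpace Ω]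
    {μ : Measure Ω} [IsProbabilityMeasure μ] [NormedAddCommGroup E] [NormedSpace ℝ E]
    [CompleteSpace E] [SecondCountableTopology E] [MeasurableSpace E] [BorelSpace E]
    {S : (Fin d → ℕ) → Ω → E} {N : Ω → Fin d → ℕ} {m : Fin d → ℕ}
    (hS : ∀ α ≤ m, Integrable (S α) μ) (hN : Measurable N)
    (hind : IndepFun N (fun ω α ↦ S α ω) μ) (hpos : ∀ α ≤ m, 0 < μ {ω | α ≤ N ω}) :
    ∫ ω, partialEstimator μ S N m ω ∂μ = ∫ ω, S m ω ∂μ := by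
  have hΔ : ∀ α ∈ Finset.Iic m, Integrable (fun ω ↦ mixedDiff (fun β ↦ S β ω) α) μ :=
    fun α hα ↦ integrable_mixedDiff fun β hβ ↦ hS β (hβ.trans (Finset.mem_Iic.1 hα))
  have hNge (α : Fin d → ℕ) : MeasurableSet {ω | α ≤ N ω} := hN measurableSet_Ici
  have hindΔ (α : Fin d → ℕ) : IndepFun N (fun ω ↦ mixedDiff (fun β ↦ S β ω) α) μ :=
    hind.comp measurable_id (measurable_mixedDiff α)
  have hterm : ∀ α ∈ Finset.Iic m,
      ∫ ω, ({ω' | α ≤ N ω'}.indicator 1 ω / μ.real {ω' | α ≤ N ω'}) •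
        mixedDiff (fun β ↦ S β ω) α ∂μ = ∫ ω, mixedDiff (fun β ↦ S β ω) α ∂μ := fun α hα ↦ by
    rw [integral_indicator_one_div_measureReal_smul (hNge α)]
    exact setAverage_preimage_eq_integral_of_indepFun (B := Set.Ici α) hN
      (hΔ α hα).aestronglyMeasurable (hindΔ α) measurableSet_Ici
      ((measureReal_ne_zero_iff (measure_ne_top _ _)).2 (hpos α (Finset.mem_Iic.1 hα)).ne')
  simp only [partialEstimator]
  rw [integral_finsetSum _ fun α hα ↦ integrable_indicator_one_div_smul (hNge α) _ (hΔ α hα),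
    Finset.sum_congr rfl hterm, ← integral_finsetSum _ hΔ]
  simp only [sum_Iic_mixedDiff]

/-- Theorem 3.1, partial estimator: with `(S_α)` integrable, `N` an
`ℕ^d`-valued random variable independent of the family `(S_α)` with `P(N ≥ α) > 0`
for all `α ∈ I_0^n`, the partial estimator
`Z̄_n = Σ_{α ∈ I_0^n} ΔS_α · 1_{N ≥ α} / P(N ≥ α)` satisfies `E[Z̄_n] = E[S_{(n,…,n)}]`. -/
theorem partial_estimator_unbiased {d : ℕ} (hd : 1 ≤ d)
    {Ω : Type*} [MeasureSpace Ω] [IsProbabilityMeasure (ℙ : Measure Ω)]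
    (S : (Fin d → ℕ) → Ω → ℝ) (hS : ∀ α, Integrable (S α) ℙ)
    (N : Ω → (Fin d → ℕ)) (hN : Measurable N)
    (hind : IndepFun N (fun ω => fun α => S α ω) ℙ)
    (n : ℕ)
    (hpos : ∀ α ∈ Finset.Iic ((fun _ => n) : Fin d → ℕ), 0 < ℙ {ω | α ≤ N ω}) :
    ∫ ω, (∑ α ∈ Finset.Iic ((fun _ => n) : Fin d → ℕ),
        mixedDiff (fun β => S β ω) α * Set.indicator {ω' | α ≤ N ω'} 1 ω
          / (ℙ {ω' | α ≤ N ω'}).toReal) ∂ℙ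
      = ∫ ω, S (fun _ => n) ω ∂ℙ := by
  simpa [partialEstimator, Measure.real, div_mul_eq_mul_div, mul_comm] using
    partial_estimator_unbiased_general (fun α _ ↦ hS α) hN hind fun α hα ↦
      hpos α (Finset.mem_Iic.2 hα)
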